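/- arXiv:2512.16116 — 2 statements merged into one kernel-verified Lean document; each statement's English description precedes it below -/
import Mathlib

section
/- Let (G,·,∘,⊳) be a post-brace with sub-adjacent brace (G,·,∗), a ∗ b = a ∘ (a ⊳ b). Define R₁(a,b) = (a⁻¹ · (a ∘ b), (a⁻¹ · (a ∘ b))‾ ∘ a ∘ b) and R₂(a,b) = (a⁻¹ · (a ∗ b), (a⁻¹ · (a ∗ b))† ∗ a ∗ b), where x⁻¹ is the inverse in (G,·), x̄ is the inverse in (G,∘), and x† = (L⊳_x)⁻¹(x̄) is the inverse in (G,∗). Then R₁ and R₂ are non-degenerate involutive set-theoretical solutions of the Yang-Baxter equation on G, and R₁ is Drinfel'd isomorphic to R₂ via the bijection ω̄ : G × G → G × G given by ω̄(a,b) = (a, (L▸_a)⁻¹(a⁻¹ · (a ∘ b))), where a ▸ b := a⁻¹ · (a ∗ b); i.e. ω̄ ∘ R₁ = R₂ ∘ ω̄. -/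
/-!
In a brace put `λ_a b = a⁻¹ · (a ∘ b)`. Each `λ_a` is additive for `·`, and `a ↦ λ_a` is a
homomorphism from `(G, ∘)` to permutations of `G` (`IsBrace.lam_circ`). If `R (a, b) = (x, y)` is
the solution attached to the brace, then `x = λ_a b` and `x ∘ y = a ∘ b`; since `·` is
commutative, `x · λ_x y = x ∘ y = a ∘ b = a · x` gives the key identity `λ_x y = a`
(`IsBrace.lam_rho`). Involutivity, non-degeneracy and the braid relation follow from it: both sides
of the braid relation preserve the product `a ∘ b ∘ c`, so it suffices to compare the first two
components, which is done by applying a suitable `λ`.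

The sub-adjacent structure `(G, ·, ∗)` of a post-brace is again a brace
(`IsPostBrace.subadjacent`), so the same results apply to `R₂`. Finally, the key identity says that
in the coordinates `(a, λ_a b)` the map `R` is the flip `(a, x) ↦ (x, a)`. This holds for both
braces, and `ω` is precisely the change from the coordinates of the first brace to those of the
second, hence intertwines `R₁` and `R₂`.
-/

structure IsGroup {G : Type*} (op : G → G → G) (e : G) (inv : G → G) : Prop where
  assoc : ∀ a b c, op (op a b) c = op a (op b c)
  one_op : ∀ a, op e a = a
  op_one : ∀ a, op a e = a
  inv_op : ∀ a, op (inv a) a = e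
  op_inv : ∀ a, op a (inv a) = e

/-- A brace: an abelian group `(G, mul)` and a group `(G, circ)` with the compatibility
`a ∘ (b · c) = (a ∘ b) · a⁻¹ · (a ∘ c)`. -/
structure IsBrace {G : Type*} (mul : G → G → G) (e : G) (inv : G → G)
    (circ : G → G → G) (ce : G) (cinv : G → G) : Prop where
  mul_group : IsGroup mul e inv
  mul_comm : ∀ a b, mul a b = mul b a
  circ_group : IsGroup circ ce cinv
  compat : ∀ a b c, circ a (mul b c) = mul (mul (circ a b) (inv a)) (circ a c)

/-- A homomorphism of braces preserves both operations. -/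
def IsBraceHom {G H : Type*} (mulG circG : G → G → G) (mulH circH : H → H → H)
    (f : G → H) : Prop :=
  (∀ a b, f (mulG a b) = mulH (f a) (f b)) ∧ (∀ a b, f (circG a b) = circH (f a) (f b))

/-- A brace automorphism: a bijective self-homomorphism. -/
def IsBraceAut {H : Type*} (mulH circH : H → H → H) (f : H → H) : Prop :=
  Function.Bijective f ∧ IsBraceHom mulH circH mulH circH f

/-- A semi-trivial action of the brace `G` on the brace `H`: each `Φ a` is a brace
automorphism of `H` and `Φ (a ∘ b) = Φ a ∘ Φ b`. -/
def IsSemiTrivialAction {G H : Type*} (circG : G → G → G)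
    (mulH circH : H → H → H) (Φ : G → H → H) : Prop :=
  (∀ a, IsBraceAut mulH circH (Φ a)) ∧ (∀ a b h, Φ (circG a b) h = Φ a (Φ b h))

/-- A relative Rota-Baxter operator on the brace `G` with respect to the semi-trivial
action `Φ` of `G` on `H`. -/
def IsRelRBO {G H : Type*} (mulG circG : G → G → G) (mulH circH : H → H → H)
    (Φ : G → H → H) (B : H → G) : Prop :=
  (∀ h k, mulG (B h) (B k) = B (mulH h k)) ∧
  (∀ h k, circG (B h) (B k) = B (circH h (Φ (B h) k)))

/-- An enhanced relative Rota-Baxter operator. -/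
def IsEnhancedRelRBO {G H : Type*} (mulG circG : G → G → G) (mulH circH : H → H → H)
    (Φ : G → H → H) (B : H → G) : Prop :=
  (∀ h k, mulG (B h) (B k) = B (mulH h k)) ∧
  (∀ (a : G) (h k : H), circG (mulG (B h) a) (B k)
      = mulG (B (circH h (Φ (mulG (B h) a) k))) a)

/-- A post-group: a group `(G, circ)` with an operation `tri` such that each left
multiplication `tri a` is an automorphism of `(G, circ)` and the weighted associativity
`(a ∘ (a ⊳ b)) ⊳ c = a ⊳ (b ⊳ c)` holds. -/
structure IsPostGroup {G : Type*} (circ : G → G → G) (ce : G) (cinv : G → G)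
    (tri : G → G → G) : Prop where
  circ_group : IsGroup circ ce cinv
  tri_bij : ∀ a, Function.Bijective (tri a)
  tri_circ : ∀ a b c, tri a (circ b c) = circ (tri a b) (tri a c)
  weighted : ∀ a b c, tri (circ a (tri a b)) c = tri a (tri b c)

/-- A post-brace: a brace `(G, mul, circ)` with `tri` making `(G, circ, tri)` a post-group
and `a ⊳ (b · c) = (a ⊳ b) · (a ⊳ c)`. -/
structure IsPostBrace {G : Type*} (mul : G → G → G) (e : G) (inv : G → G)
    (circ : G → G → G) (ce : G) (cinv : G → G) (tri : G → G → G) : Prop where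
  brace : IsBrace mul e inv circ ce cinv
  post : IsPostGroup circ ce cinv tri
  tri_mul : ∀ a b c, tri a (mul b c) = mul (tri a b) (tri a c)

/-- A two-sided brace. -/
def IsTwoSidedBrace {G : Type*} (mul : G → G → G) (e : G) (inv : G → G)
    (circ : G → G → G) (ce : G) (cinv : G → G) : Prop :=
  IsBrace mul e inv circ ce cinv ∧
  ∀ a b c, circ (mul a b) c = mul (mul (circ a c) (inv c)) (circ b c)

/-- The adjoint action of the `circ`-group: `Ad∘_a(b) = a ∘ b ∘ ā`. -/
def adC {G : Type*} (circ : G → G → G) (cinv : G → G) (a b : G) : G :=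
  circ (circ a b) (cinv a)

/-- A Rota-Baxter operator on a two-sided brace (w.r.t. the adjoint semi-trivial action). -/
def IsRBTwoSided {G : Type*} (mul circ : G → G → G) (cinv : G → G) (B : G → G) : Prop :=
  (∀ a b, mul (B a) (B b) = B (mul a b)) ∧
  (∀ a b, circ (B a) (B b) = B (circ a (adC circ cinv (B a) b)))

/-- An enhanced Rota-Baxter operator on a two-sided brace. -/
def IsEnhancedRBTwoSided {G : Type*} (mul circ : G → G → G) (cinv : G → G)
    (B : G → G) : Prop :=
  IsRBTwoSided mul circ cinv B ∧
  ∀ a b x, circ (mul (B a) x) (B b)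
      = mul (B (circ a (adC circ cinv (mul (B a) x) b))) x

/-- `R × Id` on `X × X × X`. -/
def YB12 {X : Type*} (R : X × X → X × X) : X × X × X → X × X × X :=
  fun p => ((R (p.1, p.2.1)).1, (R (p.1, p.2.1)).2, p.2.2)

/-- `Id × R` on `X × X × X`. -/
def YB23 {X : Type*} (R : X × X → X × X) : X × X × X → X × X × X :=
  fun p => (p.1, R p.2)

/-- A set-theoretical solution of the Yang-Baxter equation. -/
def IsYBSolution {X : Type*} (R : X × X → X × X) : Prop :=
  Function.Bijective R ∧
  YB12 R ∘ YB23 R ∘ YB12 R = YB23 R ∘ YB12 R ∘ YB23 R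

/-- Non-degeneracy of a solution `R (a, b) = (φ_a b, ψ_b a)`. -/
def IsNonDegenerate {X : Type*} (R : X × X → X × X) : Prop :=
  (∀ a, Function.Bijective fun b => (R (a, b)).1) ∧
  (∀ b, Function.Bijective fun a => (R (a, b)).2)

/-- Involutivity of a solution: `R ∘ R = Id`. -/
def IsInvolutiveSol {X : Type*} (R : X × X → X × X) : Prop :=
  ∀ p, R (R p) = p

/-- A matched pair of groups `(G, H, σ)` with `σ (a, h) = (r a h, l a h)`. -/
def IsMatchedPairOfGroups {G H : Type*} (opG : G → G → G) (eG : G)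
    (opH : H → H → H) (eH : H) (r : G → H → H) (l : G → H → G) : Prop :=
  (∀ h, r eG h = h) ∧
  (∀ a b h, r a (r b h) = r (opG a b) h) ∧
  (∀ a b h, l (opG a b) h = opG (l a (r b h)) (l b h)) ∧
  (∀ a, l a eH = a) ∧
  (∀ a h k, l (l a h) k = l a (opH h k)) ∧
  (∀ a h k, r a (opH h k) = opH (r a h) (r (l a h) k))

/-- A left ideal of the brace with multiplication `op` (with unit `u`) and second
operation `cop`: a subgroup of the `op`-group such that `p⁻¹ op (p cop x) ∈ S`
(expressed via the unique solution `r` of `op p r = cop p x`). -/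
def IsLeftIdealOf {P : Type*} (op : P → P → P) (u : P) (cop : P → P → P)
    (S : Set P) : Prop :=
  u ∈ S ∧ (∀ p ∈ S, ∀ q ∈ S, op p q ∈ S) ∧
  (∀ p ∈ S, ∃ q ∈ S, op p q = u ∧ op q p = u) ∧
  (∀ p : P, ∀ x ∈ S, ∀ r, op p r = cop p x → r ∈ S)

/-- `I` is an ideal of the sub-brace `S` of the ambient brace: a subgroup of `(S, mul)`,
normal in `(S, mul)` and in `(S, circ)`, and a left ideal of `S`. -/
def IsIdealOfSub {G : Type*} (mul : G → G → G) (e : G) (inv : G → G)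
    (circ : G → G → G) (cinv : G → G) (S I : Set G) : Prop :=
  I ⊆ S ∧ e ∈ I ∧
  (∀ x ∈ I, ∀ y ∈ I, mul x y ∈ I) ∧ (∀ x ∈ I, inv x ∈ I) ∧
  (∀ s ∈ S, ∀ x ∈ I, mul (mul s x) (inv s) ∈ I) ∧
  (∀ s ∈ S, ∀ x ∈ I, circ (circ s x) (cinv s) ∈ I) ∧
  (∀ s ∈ S, ∀ x ∈ I, mul (inv s) (circ s x) ∈ I)

namespace IsGroup

variable {G : Type*} {op : G → G → G} {e : G} {inv : G → G}

lemma inv_op_cancel (h : IsGroup op e inv) (a b : G) : op (inv a) (op a b) = b := by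
  rw [← h.assoc, h.inv_op, h.one_op]

lemma op_inv_cancel (h : IsGroup op e inv) (a b : G) : op a (op (inv a) b) = b := by
  rw [← h.assoc, h.op_inv, h.one_op]

lemma left_cancel (h : IsGroup op e inv) {a b c : G} (hbc : op a b = op a c) : b = c := by
  rw [← h.inv_op_cancel a b, hbc, h.inv_op_cancel]

lemma inv_inv (h : IsGroup op e inv) (a : G) : inv (inv a) = a :=
  h.left_cancel (a := inv a) (by rw [h.op_inv, h.inv_op])

/-- A monoid with right inverses is a group. -/
lemma of_op_inv (assoc : ∀ a b c, op (op a b) c = op a (op b c)) (one_op : ∀ a, op e a = a)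
    (op_one : ∀ a, op a e = a) (op_inv : ∀ a, op a (inv a) = e) : IsGroup op e inv where
  assoc := assoc
  one_op := one_op
  op_one := op_one
  op_inv := op_inv
  inv_op a := by
    have h : inv (inv a) = a := by
      rw [← one_op (inv (inv a)), ← op_inv a, assoc, op_inv, op_one]
    simpa [h] using op_inv (inv a)

end IsGroup

namespace IsBrace

/-- The map `λ_a b = a⁻¹ · (a ∘ b)` of a brace. -/
def lam {G : Type*} (mul : G → G → G) (inv : G → G) (circ : G → G → G) (a b : G) : G :=
  mul (inv a) (circ a b)

/-- The second component `(λ_a b)‾ ∘ a ∘ b` of the solution attached to a brace. -/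
def rho {G : Type*} (mul : G → G → G) (inv : G → G) (circ : G → G → G) (cinv : G → G)
    (a b : G) : G :=
  circ (circ (cinv (lam mul inv circ a b)) a) b

variable {G : Type*} {mul : G → G → G} {e : G} {inv : G → G} {circ : G → G → G} {ce : G}
  {cinv : G → G}

local notation "Λ" => lam mul inv circ
local notation "ϱ" => rho mul inv circ cinv

lemma mul_lam (h : IsBrace mul e inv circ ce cinv) (a b : G) : mul a (Λ a b) = circ a b :=
  h.mul_group.op_inv_cancel a _

lemma inv_unit (h : IsBrace mul e inv circ ce cinv) : inv ce = e := by
  have := h.compat ce e e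
  simpa only [h.circ_group.one_op, h.mul_group.one_op, h.mul_group.op_one] using this.symm

lemma lam_unit (h : IsBrace mul e inv circ ce cinv) (b : G) : Λ ce b = b := by
  rw [lam, h.inv_unit, h.mul_group.one_op, h.circ_group.one_op]

lemma lam_mul (h : IsBrace mul e inv circ ce cinv) (a b c : G) :
    Λ a (mul b c) = mul (Λ a b) (Λ a c) := by
  rw [lam, lam, lam, h.compat, h.mul_group.assoc, h.mul_group.assoc]

lemma lam_circ (h : IsBrace mul e inv circ ce cinv) (a b c : G) :
    Λ (circ a b) c = Λ a (Λ b c) := by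
  apply h.mul_group.left_cancel (a := circ a b)
  rw [h.mul_lam, h.circ_group.assoc, ← h.mul_lam b c, ← h.mul_lam a (mul _ _), h.lam_mul,
    ← h.mul_group.assoc, h.mul_lam a b]

lemma lam_cinv_lam (h : IsBrace mul e inv circ ce cinv) (a b : G) : Λ (cinv a) (Λ a b) = b := by
  rw [← h.lam_circ, h.circ_group.inv_op, h.lam_unit]

lemma lam_lam_cinv (h : IsBrace mul e inv circ ce cinv) (a b : G) : Λ a (Λ (cinv a) b) = b := by
  rw [← h.lam_circ, h.circ_group.op_inv, h.lam_unit]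

lemma lam_bijective (h : IsBrace mul e inv circ ce cinv) (a : G) : Function.Bijective (Λ a) :=
  Function.bijective_iff_has_inverse.2 ⟨Λ (cinv a), h.lam_cinv_lam a, h.lam_lam_cinv a⟩

lemma circ_lam_rho (h : IsBrace mul e inv circ ce cinv) (a b : G) :
    circ (Λ a b) (ϱ a b) = circ a b := by
  rw [rho, h.circ_group.assoc, h.circ_group.op_inv_cancel]

/-- The key identity: in the coordinates `(a, λ_a b)` the solution is the flip. -/
lemma lam_rho (h : IsBrace mul e inv circ ce cinv) (a b : G) : Λ (Λ a b) (ϱ a b) = a := by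
  apply h.mul_group.left_cancel (a := Λ a b)
  rw [h.mul_lam, h.circ_lam_rho, h.mul_comm, h.mul_lam]

lemma rho_rho (h : IsBrace mul e inv circ ce cinv) (a b : G) : ϱ (Λ a b) (ϱ a b) = b := by
  apply h.circ_group.left_cancel (a := a)
  have := h.circ_lam_rho (Λ a b) (ϱ a b)
  rwa [h.lam_rho, h.circ_lam_rho] at this

/-- The pair `(b, ρ_b a)` determines `λ_a b`, and hence, by `lam_rho`, also `a`. -/
lemma lam_rho_cinv (h : IsBrace mul e inv circ ce cinv) (a b : G) :
    Λ (ϱ a b) (cinv b) = cinv (Λ a b) := by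
  have h1 : Λ (cinv (Λ a b)) a = ϱ a b := by
    exact (h.lam_bijective (Λ a b)).1 (by rw [h.lam_lam_cinv, h.lam_rho])
  have h2 : circ (ϱ a b) (cinv b) = circ (cinv (Λ a b)) a := by
    rw [rho, h.circ_group.assoc, h.circ_group.op_inv, h.circ_group.op_one]
  apply h.mul_group.left_cancel (a := ϱ a b)
  rw [h.mul_lam, h2, ← h.mul_lam, h1, h.mul_comm]

lemma rho_bijective (h : IsBrace mul e inv circ ce cinv) (b : G) :
    Function.Bijective fun a => ϱ a b := by
  refine Function.bijective_iff_has_inverse.2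
    ⟨fun c => Λ (cinv (Λ c (cinv b))) c, fun a => ?_, fun c => ?_⟩
  · simp only [h.lam_rho_cinv, h.circ_group.inv_inv, h.lam_rho]
  · -- With `R (y, c) = (a, d)`, involutivity gives `R (a, d) = (y, c)`, and `d` equals `b`.
    have hd : ϱ (cinv (Λ c (cinv b))) c = b := by
      have h1 := h.lam_rho_cinv (Λ (cinv (Λ c (cinv b))) c) (ϱ (cinv (Λ c (cinv b))) c)
      rw [h.rho_rho, h.lam_rho, h.circ_group.inv_inv] at h1
      have h2 := (h.lam_bijective c).1 h1
      rw [← h.circ_group.inv_inv (ϱ _ _), h2, h.circ_group.inv_inv]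
    have h3 := h.rho_rho (cinv (Λ c (cinv b))) c
    rwa [hd] at h3

lemma braid_fst (h : IsBrace mul e inv circ ce cinv) (a b c : G) :
    Λ (Λ a b) (Λ (ϱ a b) c) = Λ a (Λ b c) := by
  rw [← h.lam_circ, h.circ_lam_rho, h.lam_circ]

lemma braid_snd (h : IsBrace mul e inv circ ce cinv) (a b c : G) :
    ϱ (Λ a b) (Λ (ϱ a b) c) = Λ (ϱ a (Λ b c)) (ϱ b c) := by
  apply (h.lam_bijective (Λ a (Λ b c))).1
  conv_lhs => rw [← h.braid_fst, h.lam_rho]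
  rw [← h.lam_circ, h.circ_lam_rho, h.lam_circ, h.lam_rho]

lemma braid_trd (h : IsBrace mul e inv circ ce cinv) (a b c : G) :
    ϱ (ϱ a b) c = ϱ (ϱ a (Λ b c)) (ϱ b c) := by
  -- Both sides complete the same first two components to the product `a ∘ b ∘ c`.
  have hL : circ (Λ (Λ a b) (Λ (ϱ a b) c))
      (circ (ϱ (Λ a b) (Λ (ϱ a b) c)) (ϱ (ϱ a b) c)) = circ a (circ b c) := by
    rw [← h.circ_group.assoc, h.circ_lam_rho, h.circ_group.assoc, h.circ_lam_rho,
      ← h.circ_group.assoc, h.circ_lam_rho, h.circ_group.assoc]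
  have hR : circ (Λ a (Λ b c))
      (circ (Λ (ϱ a (Λ b c)) (ϱ b c)) (ϱ (ϱ a (Λ b c)) (ϱ b c))) = circ a (circ b c) := by
    rw [h.circ_lam_rho, ← h.circ_group.assoc, h.circ_lam_rho, h.circ_group.assoc,
      h.circ_lam_rho]
  rw [h.braid_fst, h.braid_snd, ← hR] at hL
  exact h.circ_group.left_cancel (h.circ_group.left_cancel hL)

/-- A brace yields a non-degenerate involutive solution of the Yang-Baxter equation. -/
lemma solution (h : IsBrace mul e inv circ ce cinv) {R : G × G → G × G}
    (hR : ∀ a b, R (a, b) = (Λ a b, ϱ a b)) :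
    IsYBSolution R ∧ IsNonDegenerate R ∧ IsInvolutiveSol R := by
  have hinv : IsInvolutiveSol R := by
    rintro ⟨a, b⟩
    rw [hR, hR, h.lam_rho, h.rho_rho]
  refine ⟨⟨Function.Involutive.bijective hinv, ?_⟩, ⟨fun a => ?_, fun b => ?_⟩, hinv⟩
  · funext ⟨a, b, c⟩
    simp only [Function.comp_apply, YB12, YB23, hR, Prod.mk.injEq]
    exact ⟨h.braid_fst a b c, h.braid_snd a b c, h.braid_trd a b c⟩
  · simpa only [hR] using h.lam_bijective a
  · simpa only [hR] using h.rho_bijective b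

end IsBrace

/-- The sub-adjacent structure `(G, ·, ∗)` of a post-brace is a brace. -/
lemma IsPostBrace.subadjacent {G : Type*} {mul : G → G → G} {e : G} {inv : G → G}
    {circ : G → G → G} {ce : G} {cinv : G → G} {tri : G → G → G}
    (h : IsPostBrace mul e inv circ ce cinv tri)
    {star : G → G → G} (hstar : ∀ a b, star a b = circ a (tri a b))
    {dagger : G → G} (hdagger : ∀ a, tri a (dagger a) = cinv a) :
    IsBrace mul e inv star ce dagger := by
  have hg := h.post.circ_group
  have tri_unit (a : G) : tri a ce = ce := by
    apply hg.left_cancel (a := tri a ce)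
    rw [← h.post.tri_circ, hg.op_one, hg.op_one]
  have unit_tri (b : G) : tri ce b = b := by
    apply (h.post.tri_bij ce).1
    rw [← h.post.weighted, tri_unit, hg.op_one]
  refine ⟨h.brace.mul_group, h.brace.mul_comm, IsGroup.of_op_inv ?_ ?_ ?_ ?_, ?_⟩
  · intro a b c
    simp only [hstar]
    rw [h.post.weighted, h.post.tri_circ, hg.assoc]
  · intro a
    rw [hstar, unit_tri, hg.one_op]
  · intro a
    rw [hstar, tri_unit, hg.op_one]
  · intro a
    rw [hstar, hdagger, hg.op_inv]
  · intro a b c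
    simp only [hstar]
    rw [h.tri_mul, h.brace.compat]

/-- A post-brace yields two non-degenerate involutive solutions `R₁`
(from the brace `(G, ·, ∘)`) and `R₂` (from the sub-adjacent brace `(G, ·, ∗)`) of the
Yang-Baxter equation, which are Drinfel'd isomorphic via
`ω(a, b) = (a, (L▸_a)⁻¹ (a⁻¹ · (a ∘ b)))` where `a ▸ b = a⁻¹ · (a ∗ b)`. -/
theorem statement10 {G : Type*} (mul : G → G → G) (e : G) (inv : G → G)
    (circ : G → G → G) (ce : G) (cinv : G → G) (tri : G → G → G)
    (hPB : IsPostBrace mul e inv circ ce cinv tri)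
    (star : G → G → G) (hstar : ∀ a b, star a b = circ a (tri a b))
    (triInv : G → G → G)
    (htriInv : ∀ a b, triInv a (tri a b) = b ∧ tri a (triInv a b) = b)
    (dagger : G → G) (hdagger : ∀ a, dagger a = triInv a (cinv a))
    (lam : G → G → G) (hlam : ∀ a b, lam a b = mul (inv a) (star a b))
    (lamInv : G → G → G)
    (hlamInv : ∀ a b, lamInv a (lam a b) = b ∧ lam a (lamInv a b) = b)
    (R1 R2 : G × G → G × G)
    (hR1 : ∀ a b, R1 (a, b) = (mul (inv a) (circ a b),
      circ (circ (cinv (mul (inv a) (circ a b))) a) b))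
    (hR2 : ∀ a b, R2 (a, b) = (mul (inv a) (star a b),
      star (star (dagger (mul (inv a) (star a b))) a) b))
    (ω : G × G → G × G)
    (hω : ∀ a b, ω (a, b) = (a, lamInv a (mul (inv a) (circ a b)))) :
    (IsYBSolution R1 ∧ IsNonDegenerate R1 ∧ IsInvolutiveSol R1) ∧
    (IsYBSolution R2 ∧ IsNonDegenerate R2 ∧ IsInvolutiveSol R2) ∧
    Function.Bijective ω ∧ (∀ p, ω (R1 p) = R2 (ω p)) := by
  have h1 := hPB.brace
  have h2 : IsBrace mul e inv star ce dagger :=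
    hPB.subadjacent hstar fun a => by rw [hdagger, (htriInv a _).2]
  refine ⟨h1.solution hR1, h2.solution hR2, ?_, ?_⟩
  · refine Function.bijective_iff_has_inverse.2
      ⟨fun p => (p.1, IsBrace.lam mul inv circ (cinv p.1) (lam p.1 p.2)), ?_, ?_⟩
    · rintro ⟨a, b⟩
      simp only [hω, (hlamInv _ _).2]
      exact Prod.ext rfl (h1.lam_cinv_lam a b)
    · rintro ⟨a, b⟩
      have := h1.lam_lam_cinv a (lam a b)
      rw [IsBrace.lam] at this
      simp only [hω, this, (hlamInv _ _).1]
  · rintro ⟨a, b⟩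
    have hlam_star (a b : G) : lam a b = IsBrace.lam mul inv star a b := hlam a b
    -- `R₁` is the flip in the coordinates `(a, x)`, where `x = a⁻¹ · (a ∘ b)`.
    have e1 := h1.lam_rho a b
    -- `R₂` is the flip in its own coordinates, and `ω (a, b)` has the same coordinates `(a, x)`.
    have e2 := h2.lam_rho a (lamInv a (IsBrace.lam mul inv circ a b))
    have e3 : IsBrace.lam mul inv star a (lamInv a (IsBrace.lam mul inv circ a b))
        = IsBrace.lam mul inv circ a b := by rw [← hlam_star, (hlamInv _ _).2]
    change ω (R1 (a, b)) = _
    rw [show R1 (a, b) = (IsBrace.lam mul inv circ a b, IsBrace.rho mul inv circ cinv a b) from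
      hR1 a b, hω, hω]
    change (_, lamInv _ (IsBrace.lam mul inv circ _ _)) =
      R2 (a, lamInv a (IsBrace.lam mul inv circ a b))
    rw [show R2 (a, lamInv a (IsBrace.lam mul inv circ a b)) = (IsBrace.lam mul inv star a _,
      IsBrace.rho mul inv star dagger a _) from hR2 a _, e1, e3]
    rw [e3, ← hlam_star] at e2
    rw [← (hlamInv (IsBrace.lam mul inv circ a b) (IsBrace.rho mul inv star dagger a _)).1, e2]
end

section
/- Let (G,·,∘) be a two-sided brace. Then the adjoint action of the group (G,∘), Ad∘ : G → Aut(G) given by Ad∘_a(b) = a ∘ b ∘ ā (with ā the inverse of a in (G,∘)), is a semi-trivial action of the brace (G,·,∘) on itself; in particular each Ad∘_a is an automorphism of the abelian group (G,·): Ad∘_a(b · c) = Ad∘_a(b) · Ad∘_a(c) for all a,b,c ∈ G. -/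
/-- The two identity elements of a brace coincide: expanding `1 ∘ (e · e)` for the `∘`-identity
`1` by the compatibility law gives `e = 1⁻¹`. -/
theorem IsBrace.circ_one_eq {G : Type*} {mul : G → G → G} {e : G} {inv : G → G}
    {circ : G → G → G} {ce : G} {cinv : G → G} (h : IsBrace mul e inv circ ce cinv) :
    ce = e := by
  have h1 := h.compat ce e e
  simp only [h.circ_group.one_op, h.mul_group.one_op, h.mul_group.op_one] at h1
  rw [← h.mul_group.op_one ce, h1, h.mul_group.op_inv, h1]

/-- In a two-sided brace `a⁻¹ ∘ ā = ā · ā`, by expanding `(a · a⁻¹) ∘ ā = ā` on the right. -/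
theorem IsTwoSidedBrace.inv_circ_cinv {G : Type*} {mul : G → G → G} {e : G} {inv : G → G}
    {circ : G → G → G} {ce : G} {cinv : G → G} (h : IsTwoSidedBrace mul e inv circ ce cinv)
    (a : G) : circ (inv a) (cinv a) = mul (cinv a) (cinv a) := by
  obtain ⟨hB, hR⟩ := h
  have he := hB.circ_one_eq
  have h1 := hR a (inv a) (cinv a)
  rw [hB.mul_group.op_inv, hB.circ_group.op_inv, ← he, hB.circ_group.one_op, he,
    hB.mul_group.one_op] at h1
  have h2 := congrArg (mul (cinv a)) h1
  rw [← hB.mul_group.assoc, hB.mul_group.op_inv, hB.mul_group.one_op] at h2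
  exact h2.symm

theorem IsTwoSidedBrace.adC_mul {G : Type*} {mul : G → G → G} {e : G} {inv : G → G}
    {circ : G → G → G} {ce : G} {cinv : G → G} (h : IsTwoSidedBrace mul e inv circ ce cinv)
    (a b c : G) :
    adC circ cinv a (mul b c) = mul (adC circ cinv a b) (adC circ cinv a c) := by
  have hinv := h.inv_circ_cinv a
  obtain ⟨hB, hR⟩ := h
  -- `ā⁻¹ · (ā · ā) · ā⁻¹` collapses between the two conjugates
  have hcancel : ∀ x y z : G,
      mul (mul (mul (mul x (inv z)) (mul z z)) (inv z)) y = mul x y := by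
    intro x y z
    have h1 : mul (inv z) (mul z z) = z := by
      rw [← hB.mul_group.assoc, hB.mul_group.inv_op, hB.mul_group.one_op]
    rw [hB.mul_group.assoc x, h1, hB.mul_group.assoc x, hB.mul_group.op_inv,
      hB.mul_group.op_one]
  simp only [adC]
  rw [hB.compat, hR, hR, hinv, hcancel]

/-- For a two-sided brace, the adjoint action `Ad∘_a(b) = a ∘ b ∘ ā` of
the group `(G, ∘)` is a semi-trivial action of the brace on itself; in particular each
`Ad∘_a` is an automorphism of the abelian group `(G, ·)`. -/
theorem statement14 {G : Type*} (mul : G → G → G) (e : G) (inv : G → G)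
    (circ : G → G → G) (ce : G) (cinv : G → G)
    (hG : IsTwoSidedBrace mul e inv circ ce cinv) :
    IsSemiTrivialAction circ mul circ (fun a b => adC circ cinv a b) ∧
    (∀ a b c, adC circ cinv a (mul b c)
        = mul (adC circ cinv a b) (adC circ cinv a c)) := by
  let _ : Group G :=
    { mul := circ
      one := ce
      inv := cinv
      mul_assoc := hG.1.circ_group.assoc
      one_mul := hG.1.circ_group.one_op
      mul_one := hG.1.circ_group.op_one
      inv_mul_cancel := hG.1.circ_group.inv_op }
  -- for this group structure, `adC circ cinv a` is definitionally `MulAut.conj a`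
  refine ⟨⟨fun a => ⟨?_, hG.adC_mul a, fun b c => ?_⟩, fun a b x => ?_⟩, hG.adC_mul⟩
  · exact (MulAut.conj a).bijective
  · exact map_mul (MulAut.conj a) b c
  · exact DFunLike.congr_fun (map_mul MulAut.conj a b) x
end
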